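/- Let g, g' : ℝ² → [0,∞) be continuous, compactly supported, and not identically zero. Then for every θ̄ ∈ ℝ, the pairing N_{g,g'}(θ̄) = ∫_{(ℝ²)⁴} g(x₁) g(x₂) W^{θ̄}(1,(x₁,x₂),(x₁',x₂')) g'(x₁') g'(x₂') dx₁ dx₂ dx₁' dx₂' is finite and strictly positive: 0 < N_{g,g'}(θ̄) < ∞. -/

import Mathlib

open MeasureTheory Set ENNReal

noncomputable section

abbrev Plane := EuclideanSpace ℝ (Fin 2)

/-- The 2d heat kernel `p(t,x) = (2πt)⁻¹ exp(−|x|²/(2t))`. -/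
def heatK (t : ℝ) (x : Plane) : ℝ :=
  (2 * Real.pi * t)⁻¹ * Real.exp (-‖x‖ ^ 2 / (2 * t))

/-- `j^{θ̄}(t) = e^{θ̄ t} ∫₀^∞ u^{t−1}/Γ(u) du`. -/
def jfn (θ : ℝ) (t : ℝ) : ℝ :=
  Real.exp (θ * t) * ∫ u in Ioi (0 : ℝ), u ^ (t - 1) / Real.Gamma u

/-- The kernel `W^{θ̄}(t,(x₁,x₂),(x₁',x₂'))`, defined as a fourfold iterated integral with
values in `[0,∞]`. Here `u'' = t − u − u'`. -/
def Wker (θ t : ℝ) (x₁ x₂ x₁' x₂' : Plane) : ℝ≥0∞ :=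
  ∫⁻ u in Ioo (0 : ℝ) t, ∫⁻ u' in Ioo (0 : ℝ) (t - u), ∫⁻ y : Plane, ∫⁻ y' : Plane,
    ENNReal.ofReal (heatK u (x₁ - y) * heatK u (x₂ - y) *
      (4 * Real.pi * jfn θ u' * heatK (u' / 2) (y - y')) *
      (heatK (t - u - u') (y' - x₁') * heatK (t - u - u') (y' - x₂')))

/-- The pairing `N_{g,g'}(θ̄) = ∫ g(x₁)g(x₂) W^{θ̄}(1,(x₁,x₂),(x₁',x₂')) g'(x₁')g'(x₂') dx`. -/
def Npair (g g' : Plane → ℝ) (θ : ℝ) : ℝ≥0∞ :=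
  ∫⁻ x₁ : Plane, ∫⁻ x₂ : Plane, ∫⁻ x₁' : Plane, ∫⁻ x₂' : Plane,
    ENNReal.ofReal (g x₁ * g x₂) * Wker θ 1 x₁ x₂ x₁' x₂' *
      ENNReal.ofReal (g' x₁' * g' x₂')

/-! By Tonelli, integrating `W^{θ̄}` against `μ ⊗ μ ⊗ μ' ⊗ μ'` gives the integral over
`((u,u'),(y,y'))` of `4π j^{θ̄}(u') p(u'/2, y−y') (P_u μ)(y)² (P_{u''} μ')(y')²`, where `P` is the
heat flow. The integrand is strictly positive, hence so is the integral. It is finite when `μ` is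
finite and `μ`, `μ'` have bounded densities: `j^{θ̄}` is bounded on bounded intervals because `Γ`
grows faster than any exponential, one factor `P_u μ` and both factors `P_{u''} μ'`
are bounded by the densities, and the other factor `P_u μ`, like `p(u'/2, y−·)`, has finite mass. -/

theorem exp_neg_mul_rpow_le_Gamma_add_one {a s : ℝ} (ha : 0 ≤ a) (hs : 0 ≤ s) :
    Real.exp (-a) * a ^ s ≤ Real.Gamma (s + 1) := by
  have hs' : 0 < s + 1 := by linarith
  have hconv : IntegrableOn (fun x ↦ Real.exp (-x) * x ^ s) (Ioi 0) := by
    simpa only [add_sub_cancel_right] using Real.GammaIntegral_convergent hs'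
  calc Real.exp (-a) * a ^ s = ∫ x in Ioi a, Real.exp (-x) * a ^ s := by
        rw [integral_mul_const, integral_exp_neg_Ioi]
    _ ≤ ∫ x in Ioi a, Real.exp (-x) * x ^ s :=
        setIntegral_mono_on ((integrableOn_exp_neg_Ioi a).mul_const _)
          (hconv.mono_set (Ioi_subset_Ioi ha)) measurableSet_Ioi
          fun x (hx : a < x) ↦ by gcongr
    _ ≤ ∫ x in Ioi 0, Real.exp (-x) * x ^ s :=
        setIntegral_mono_set hconv
          (ae_restrict_of_forall_mem measurableSet_Ioi fun x (hx : 0 < x) ↦ by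
            simp only [Pi.zero_apply]; positivity)
          (Ioi_subset_Ioi ha).eventuallyLE
    _ = Real.Gamma (s + 1) := by rw [Real.Gamma_eq_integral hs', add_sub_cancel_right]

theorem continuous_inv_Gamma : Continuous fun s : ℝ ↦ (Real.Gamma s)⁻¹ := by
  have h : Continuous fun s : ℝ ↦ ((Complex.Gamma s)⁻¹).re :=
    Complex.continuous_re.comp
      (Complex.differentiable_one_div_Gamma.continuous.comp Complex.continuous_ofReal)
  simpa only [Complex.Gamma_ofReal, ← Complex.ofReal_inv, Complex.ofReal_re] using h

theorem rpow_sub_one_div_Gamma_pos (t : ℝ) {u : ℝ} (hu : 0 < u) :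
    0 < u ^ (t - 1) / Real.Gamma u :=
  div_pos (Real.rpow_pos_of_pos hu _) (Real.Gamma_pos_of_pos hu)

theorem rpow_sub_one_div_Gamma_le {t u : ℝ} (ht : 0 ≤ t) (hu : 0 < u) :
    u ^ (t - 1) / Real.Gamma u ≤ Real.exp (Real.exp 2) * Real.Gamma (t + 1) * Real.exp (-u) := by
  have := Real.Gamma_pos_of_pos hu
  have hpow : Real.exp (-u) * u ^ t ≤ Real.Gamma (t + 1) :=
    exp_neg_mul_rpow_le_Gamma_add_one hu.le ht
  have hgrowth : Real.exp (-Real.exp 2) * Real.exp (2 * u) ≤ u * Real.Gamma u := by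
    rw [Real.exp_mul, ← Real.Gamma_add_one hu.ne']
    exact exp_neg_mul_rpow_le_Gamma_add_one (Real.exp_pos 2).le hu.le
  rw [Real.rpow_sub_one hu.ne', div_div, div_le_iff₀ (by positivity)]
  calc u ^ t = Real.exp u * (Real.exp (-u) * u ^ t) := by
        rw [← mul_assoc, ← Real.exp_add, add_neg_cancel, Real.exp_zero, one_mul]
    _ ≤ Real.exp u * Real.Gamma (t + 1) := by gcongr
    _ = Real.exp (Real.exp 2) * Real.Gamma (t + 1) * Real.exp (-u) *
        (Real.exp (-Real.exp 2) * Real.exp (2 * u)) := by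
      have hexp : Real.exp u = Real.exp (Real.exp 2) * Real.exp (-u) *
          (Real.exp (-Real.exp 2) * Real.exp (2 * u)) := by
        simp only [← Real.exp_add]; congr 1; ring
      rw [hexp]; ring
    _ ≤ _ := by
      have := Real.Gamma_pos_of_pos (by linarith : 0 < t + 1)
      gcongr

theorem integrableOn_rpow_sub_one_div_Gamma {t : ℝ} (ht : 0 ≤ t) :
    IntegrableOn (fun u : ℝ ↦ u ^ (t - 1) / Real.Gamma u) (Ioi 0) := by
  refine ((integrableOn_exp_neg_Ioi 0).const_mul (Real.exp (Real.exp 2) * Real.Gamma (t + 1))).mono'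
    ?_ (ae_restrict_of_forall_mem measurableSet_Ioi fun u hu ↦ ?_)
  · have := continuous_inv_Gamma.measurable
    simp only [div_eq_mul_inv]
    fun_prop
  · rw [Real.norm_of_nonneg (rpow_sub_one_div_Gamma_pos t hu).le]
    exact rpow_sub_one_div_Gamma_le ht hu

theorem jfn_pos (θ : ℝ) {t : ℝ} (ht : 0 ≤ t) : 0 < jfn θ t := by
  refine mul_pos (Real.exp_pos _) ?_
  have hsupp : Ioi 0 ⊆ Function.support fun u : ℝ ↦ u ^ (t - 1) / Real.Gamma u :=
    fun u hu ↦ (rpow_sub_one_div_Gamma_pos t hu).ne'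
  rw [setIntegral_pos_iff_support_of_nonneg_ae
    (ae_restrict_of_forall_mem measurableSet_Ioi fun u hu ↦ (rpow_sub_one_div_Gamma_pos t hu).le)
    (integrableOn_rpow_sub_one_div_Gamma ht), inter_eq_right.2 hsupp]
  simp

theorem jfn_le (θ : ℝ) {t : ℝ} (ht : 0 ≤ t) :
    jfn θ t ≤ Real.exp (θ * t) * (Real.exp (Real.exp 2) * Real.Gamma (t + 1)) := by
  refine mul_le_mul_of_nonneg_left ?_ (Real.exp_pos _).le
  calc ∫ u in Ioi (0 : ℝ), u ^ (t - 1) / Real.Gamma u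
      ≤ ∫ u in Ioi (0 : ℝ), Real.exp (Real.exp 2) * Real.Gamma (t + 1) * Real.exp (-u) :=
        setIntegral_mono_on (integrableOn_rpow_sub_one_div_Gamma ht)
          ((integrableOn_exp_neg_Ioi 0).const_mul _) measurableSet_Ioi
          fun u hu ↦ rpow_sub_one_div_Gamma_le ht hu
    _ = Real.exp (Real.exp 2) * Real.Gamma (t + 1) := by
        rw [integral_const_mul, integral_exp_neg_Ioi_zero, mul_one]

theorem bddAbove_jfn_image_Icc (θ T : ℝ) : BddAbove (jfn θ '' Icc 0 T) := by
  have hcont : ContinuousOn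
      (fun t ↦ Real.exp (θ * t) * (Real.exp (Real.exp 2) * Real.Gamma (t + 1))) (Icc 0 T) := by
    have hΓ : ContinuousOn (fun t ↦ Real.Gamma (t + 1)) (Icc 0 T) :=
      Real.differentiableOn_Gamma_Ioi.continuousOn.comp (by fun_prop)
        fun t ht ↦ show 0 < t + 1 by linarith [ht.1]
    fun_prop
  obtain ⟨C, hC⟩ := isCompact_Icc.bddAbove_image hcont
  refine ⟨C, forall_mem_image.2 fun t ht ↦ ?_⟩
  exact (jfn_le θ ht.1).trans (hC (mem_image_of_mem _ ht))

@[fun_prop]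
theorem measurable_jfn (θ : ℝ) : Measurable (jfn θ) := by
  have hF : Measurable fun p : ℝ × ℝ ↦ p.2 ^ (p.1 - 1) / Real.Gamma p.2 := by
    simp only [div_eq_mul_inv]
    exact (by fun_prop : Measurable fun p : ℝ × ℝ ↦ p.2 ^ (p.1 - 1)).mul
      (continuous_inv_Gamma.measurable.comp measurable_snd)
  exact (by fun_prop : Measurable fun t ↦ Real.exp (θ * t)).mul
    hF.stronglyMeasurable.integral_prod_right.measurable

theorem heatK_pos {t : ℝ} (ht : 0 < t) (x : Plane) : 0 < heatK t x := by
  unfold heatK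
  positivity

theorem heatK_sub_comm (t : ℝ) (x y : Plane) : heatK t (x - y) = heatK t (y - x) := by
  simp only [heatK, norm_sub_rev x y]

@[fun_prop]
theorem measurable_heatK {α : Type*} [MeasurableSpace α] {f : α → ℝ} {h : α → Plane}
    (hf : Measurable f) (hh : Measurable h) : Measurable fun a ↦ heatK (f a) (h a) := by
  unfold heatK
  fun_prop

theorem integral_heatK {t : ℝ} (ht : 0 < t) : ∫ x : Plane, heatK t x = 1 := by
  have hgauss := GaussianFourier.integral_rexp_neg_mul_sq_norm (V := Plane) (b := (2 * t)⁻¹)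
    (by positivity)
  have hexponent (x : Plane) : -‖x‖ ^ 2 / (2 * t) = -(2 * t)⁻¹ * ‖x‖ ^ 2 := by ring
  simp only [heatK, hexponent]
  rw [integral_const_mul, hgauss, finrank_euclideanSpace_fin]
  norm_num
  field_simp

theorem lintegral_heatK {t : ℝ} (ht : 0 < t) :
    ∫⁻ x : Plane, ENNReal.ofReal (heatK t x) = 1 := by
  have hint : Integrable (heatK t) :=
    Integrable.of_integral_ne_zero (by rw [integral_heatK ht]; exact one_ne_zero)
  rw [← ofReal_integral_eq_lintegral_ofReal hint (.of_forall fun x ↦ (heatK_pos ht x).le),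
    integral_heatK ht, ofReal_one]

theorem lintegral_heatK_sub_right {t : ℝ} (ht : 0 < t) (y : Plane) :
    ∫⁻ x, ENNReal.ofReal (heatK t (x - y)) = 1 := by
  rw [lintegral_sub_right_eq_self (fun x ↦ ENNReal.ofReal (heatK t x)) y, lintegral_heatK ht]

theorem lintegral_heatK_sub_left {t : ℝ} (ht : 0 < t) (x : Plane) :
    ∫⁻ y, ENNReal.ofReal (heatK t (x - y)) = 1 := by
  simpa only [heatK_sub_comm t x] using lintegral_heatK_sub_right ht x

/-- The density `P_t μ` at time `t` of the heat flow started from the measure `μ`. -/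
def heatFlow (t : ℝ) (μ : Measure Plane) (y : Plane) : ℝ≥0∞ :=
  ∫⁻ x, ENNReal.ofReal (heatK t (x - y)) ∂μ

section HeatFlow

variable {t : ℝ} {μ : Measure Plane}

@[fun_prop]
theorem measurable_heatFlow {α : Type*} [MeasurableSpace α] [SFinite μ] {f : α → ℝ} {h : α → Plane}
    (hf : Measurable f) (hh : Measurable h) : Measurable fun a ↦ heatFlow (f a) μ (h a) :=
  Measurable.lintegral_prod_right' (f := fun p : α × Plane ↦
    ENNReal.ofReal (heatK (f p.1) (p.2 - h p.1))) (by fun_prop)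

theorem heatFlow_pos (ht : 0 < t) (hμ : μ ≠ 0) (y : Plane) : 0 < heatFlow t μ y := by
  refine (lintegral_pos_iff_support (by fun_prop)).2 ?_
  rw [Function.support_eq_univ fun x ↦ (ofReal_pos.2 (heatK_pos ht (x - y))).ne']
  exact Measure.measure_univ_pos.2 hμ

theorem heatFlow_le_of_le_smul_volume (ht : 0 < t) {M : ℝ≥0∞} (hμ : μ ≤ M • volume) (y : Plane) :
    heatFlow t μ y ≤ M :=
  calc heatFlow t μ y ≤ ∫⁻ x, ENNReal.ofReal (heatK t (x - y)) ∂(M • volume) :=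
        lintegral_mono' hμ le_rfl
    _ = M := by rw [lintegral_smul_measure, lintegral_heatK_sub_right ht, smul_eq_mul, mul_one]

theorem lintegral_heatFlow [SFinite μ] (ht : 0 < t) : ∫⁻ y, heatFlow t μ y = μ univ := by
  unfold heatFlow
  rw [lintegral_lintegral_swap (by fun_prop)]
  simp only [lintegral_heatK_sub_left ht, lintegral_one]

end HeatFlow

section Tonelli

variable {α β : Type*} [MeasurableSpace α] [MeasurableSpace β]

theorem setLIntegral_regionBetween {μ : Measure α} [SFinite μ] {f g : α → ℝ} {s : Set α}
    (hf : Measurable f) (hg : Measurable g) (hs : MeasurableSet s) {F : α × ℝ → ℝ≥0∞}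
    (hF : Measurable F) :
    ∫⁻ p in regionBetween f g s, F p ∂(μ.prod volume) =
      ∫⁻ x in s, (∫⁻ y in Ioo (f x) (g x), F (x, y)) ∂μ := by
  have hregion := measurableSet_regionBetween hf hg hs
  rw [← lintegral_indicator hregion, lintegral_prod _ (hF.indicator hregion).aemeasurable,
    ← lintegral_indicator hs]
  congr 1 with x
  by_cases hx : x ∈ s
  · rw [indicator_of_mem hx, ← lintegral_indicator measurableSet_Ioo]
    simp [regionBetween, indicator, hx]
  · simp [regionBetween, indicator, hx]

variable {μ : Measure α} {ρ : Measure β} [SFinite μ] [SFinite ρ]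
  {k : β → ℝ≥0∞} {a : α → β → ℝ≥0∞}

theorem lintegral_lintegral_const_mul (hk : Measurable k) (ha : Measurable (Function.uncurry a)) :
    ∫⁻ x, ∫⁻ z, k z * a x z ∂ρ ∂μ = ∫⁻ z, k z * ∫⁻ x, a x z ∂μ ∂ρ := by
  rw [lintegral_lintegral_swap (by fun_prop)]
  congr 1 with z
  exact lintegral_const_mul _ (by fun_prop)

theorem lintegral_lintegral_lintegral_mul_mul (hk : Measurable k)
    (ha : Measurable (Function.uncurry a)) :
    ∫⁻ x₁, ∫⁻ x₂, ∫⁻ z, k z * (a x₁ z * a x₂ z) ∂ρ ∂μ ∂μ =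
      ∫⁻ z, k z * (∫⁻ x, a x z ∂μ) ^ 2 ∂ρ := by
  have := ha.lintegral_prod_left (μ := μ)
  calc ∫⁻ x₁, ∫⁻ x₂, ∫⁻ z, k z * (a x₁ z * a x₂ z) ∂ρ ∂μ ∂μ
      = ∫⁻ x₁, ∫⁻ z, (k z * ∫⁻ x, a x z ∂μ) * a x₁ z ∂ρ ∂μ := by
        congr 1 with x₁
        simp only [← mul_assoc]
        rw [lintegral_lintegral_const_mul (by fun_prop) ha]
        simp only [mul_right_comm]
    _ = ∫⁻ z, k z * (∫⁻ x, a x z ∂μ) ^ 2 ∂ρ := by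
        rw [lintegral_lintegral_const_mul (by fun_prop) ha]
        simp only [sq, mul_assoc]

end Tonelli

/-- The times `(u,u')` with `0 < u`, `0 < u'` and `u + u' < t` over which `W^{θ̄}` integrates. -/
def timeSimplex (t : ℝ) : Set (ℝ × ℝ) :=
  regionBetween 0 (fun u ↦ t - u) (Ioo 0 t)

theorem mem_timeSimplex {t : ℝ} {p : ℝ × ℝ} :
    p ∈ timeSimplex t ↔ 0 < p.1 ∧ 0 < p.2 ∧ 0 < t - p.1 - p.2 := by
  simp only [timeSimplex, regionBetween, mem_ofPred_eq, mem_Ioo, Pi.zero_apply]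
  grind

theorem isOpen_timeSimplex (t : ℝ) : IsOpen (timeSimplex t) := by
  have : timeSimplex t = {p | 0 < p.1} ∩ ({p | 0 < p.2} ∩ {p | 0 < t - p.1 - p.2}) :=
    Set.ext fun p ↦ mem_timeSimplex
  rw [this]
  exact (isOpen_lt (by fun_prop) (by fun_prop)).inter
    ((isOpen_lt (by fun_prop) (by fun_prop)).inter (isOpen_lt (by fun_prop) (by fun_prop)))

/-- The space of the integration variables `((u,u'),(y,y'))` of `W^{θ̄}`. -/
abbrev ExcursionSpace := (ℝ × ℝ) × (Plane × Plane)

/-- The domain of integration of `W^{θ̄}(t, ·, ·)`, in which `y` and `y'` are unconstrained. -/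
def excursionDomain (t : ℝ) : Set ExcursionSpace :=
  timeSimplex t ×ˢ univ

theorem isOpen_excursionDomain (t : ℝ) : IsOpen (excursionDomain t) :=
  (isOpen_timeSimplex t).prod isOpen_univ

theorem volume_excursionDomain_pos {t : ℝ} (ht : 0 < t) : 0 < volume (excursionDomain t) := by
  have : (volume : Measure ExcursionSpace).IsOpenPosMeasure := Measure.prod.instIsOpenPosMeasure
  refine (isOpen_excursionDomain t).measure_pos volume ⟨((t / 3, t / 3), 0), ?_, mem_univ _⟩
  exact mem_timeSimplex.2 ⟨by positivity, by positivity, by linarith⟩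

theorem setLIntegral_excursionDomain (t : ℝ) {F : ExcursionSpace → ℝ≥0∞} (hF : Measurable F) :
    ∫⁻ z in excursionDomain t, F z =
      ∫⁻ u in Ioo 0 t, ∫⁻ u' in Ioo 0 (t - u), ∫⁻ y, ∫⁻ y', F ((u, u'), (y, y')) := by
  have hspace (p : ℝ × ℝ) : ∫⁻ q, F (p, q) = ∫⁻ y, ∫⁻ y', F (p, (y, y')) := by
    rw [Measure.volume_eq_prod, lintegral_prod _ (by fun_prop)]
  rw [excursionDomain, Measure.volume_eq_prod, setLIntegral_prod _ hF.aemeasurable]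
  simp only [Measure.restrict_univ]
  rw [timeSimplex, Measure.volume_eq_prod, setLIntegral_regionBetween
    measurable_zero (by fun_prop) measurableSet_Ioo hF.lintegral_prod_right']
  simp only [hspace, Pi.zero_apply]

/-- The factor `4π j^{θ̄}(u') p(u'/2, y−y')` of the integrand of `W^{θ̄}`, at `((u,u'),(y,y'))`. -/
def excursionWeight (θ : ℝ) (z : ExcursionSpace) : ℝ≥0∞ :=
  ENNReal.ofReal (4 * Real.pi * jfn θ z.1.2 * heatK (z.1.2 / 2) (z.2.1 - z.2.2))

@[fun_prop]
theorem measurable_excursionWeight (θ : ℝ) : Measurable (excursionWeight θ) := by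
  unfold excursionWeight
  fun_prop

theorem excursionWeight_pos (θ : ℝ) {z : ExcursionSpace} (hz : 0 < z.1.2) :
    0 < excursionWeight θ z :=
  ofReal_pos.2 <| mul_pos (mul_pos (by positivity) (jfn_pos θ hz.le)) (heatK_pos (by positivity) _)

theorem exists_excursionWeight_le (θ t : ℝ) : ∃ C : ℝ≥0∞, C ≠ ∞ ∧ ∀ z ∈ excursionDomain t,
    excursionWeight θ z ≤ C * ENNReal.ofReal (heatK (z.1.2 / 2) (z.2.1 - z.2.2)) := by
  obtain ⟨C, hC⟩ := bddAbove_jfn_image_Icc θ t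
  refine ⟨ENNReal.ofReal (4 * Real.pi * C), ofReal_ne_top, fun z hz ↦ ?_⟩
  obtain ⟨hu, hu', hu''⟩ := mem_timeSimplex.1 hz.1
  have hheat := heatK_pos (half_pos hu') (z.2.1 - z.2.2)
  rw [excursionWeight, ofReal_mul' hheat.le]
  gcongr
  exact hC (mem_image_of_mem _ ⟨hu'.le, by linarith⟩)

theorem Wker_eq_setLIntegral (θ t : ℝ) (x₁ x₂ x₁' x₂' : Plane) :
    Wker θ t x₁ x₂ x₁' x₂' = ∫⁻ z in excursionDomain t, excursionWeight θ z *
      (ENNReal.ofReal (heatK z.1.1 (x₁ - z.2.1)) * ENNReal.ofReal (heatK z.1.1 (x₂ - z.2.1))) *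
      (ENNReal.ofReal (heatK (t - z.1.1 - z.1.2) (x₁' - z.2.2)) *
        ENNReal.ofReal (heatK (t - z.1.1 - z.1.2) (x₂' - z.2.2))) := by
  unfold Wker
  rw [← setLIntegral_excursionDomain t (F := fun z ↦ ENNReal.ofReal
    (heatK z.1.1 (x₁ - z.2.1) * heatK z.1.1 (x₂ - z.2.1) *
      (4 * Real.pi * jfn θ z.1.2 * heatK (z.1.2 / 2) (z.2.1 - z.2.2)) *
      (heatK (t - z.1.1 - z.1.2) (z.2.2 - x₁') * heatK (t - z.1.1 - z.1.2) (z.2.2 - x₂'))))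
    (by fun_prop)]
  refine setLIntegral_congr_fun (isOpen_excursionDomain t).measurableSet fun z hz ↦ ?_
  obtain ⟨hu, -, hu''⟩ := mem_timeSimplex.1 hz.1
  have hentry (x y : Plane) : 0 ≤ heatK z.1.1 (x - y) := (heatK_pos hu _).le
  have hexit (x y : Plane) : 0 ≤ heatK (t - z.1.1 - z.1.2) (x - y) := (heatK_pos hu'' _).le
  rw [heatK_sub_comm _ x₁', heatK_sub_comm _ x₂', excursionWeight,
    ofReal_mul' (mul_nonneg (hexit _ _) (hexit _ _)), ofReal_mul (hexit _ _),
    ofReal_mul (mul_nonneg (hentry _ _) (hentry _ _)), ofReal_mul (hentry _ _),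
    mul_comm (ENNReal.ofReal (4 * _ * _ * _))]

/-- The pairing of `W^{θ̄}(t, ·, ·)` with `μ ⊗ μ ⊗ μ' ⊗ μ'`; `Npair` is the case where `t = 1` and
`μ`, `μ'` have densities `g`, `g'`. -/
def measurePairing (θ t : ℝ) (μ μ' : Measure Plane) : ℝ≥0∞ :=
  ∫⁻ x₁, ∫⁻ x₂, ∫⁻ x₁', ∫⁻ x₂', Wker θ t x₁ x₂ x₁' x₂' ∂μ' ∂μ' ∂μ ∂μ

section MeasurePairing

variable (θ : ℝ) {t : ℝ} {μ μ' : Measure Plane} [SFinite μ']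

theorem measurePairing_eq_setLIntegral [SFinite μ] :
    measurePairing θ t μ μ' = ∫⁻ z in excursionDomain t, excursionWeight θ z *
      heatFlow z.1.1 μ z.2.1 ^ 2 * heatFlow (t - z.1.1 - z.1.2) μ' z.2.2 ^ 2 := by
  simp only [measurePairing, Wker_eq_setLIntegral]
  calc _ = ∫⁻ x₁, ∫⁻ x₂, (∫⁻ z in excursionDomain t, excursionWeight θ z *
        heatFlow (t - z.1.1 - z.1.2) μ' z.2.2 ^ 2 *
          (ENNReal.ofReal (heatK z.1.1 (x₁ - z.2.1)) *
            ENNReal.ofReal (heatK z.1.1 (x₂ - z.2.1)))) ∂μ ∂μ := by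
        congr 1 with x₁
        congr 1 with x₂
        rw [lintegral_lintegral_lintegral_mul_mul
          (a := fun x (z : ExcursionSpace) ↦ ENNReal.ofReal (heatK (t - z.1.1 - z.1.2) (x - z.2.2)))
          (by fun_prop) (by fun_prop)]
        simp only [mul_right_comm, heatFlow]
    _ = _ := by
        rw [lintegral_lintegral_lintegral_mul_mul
          (a := fun x (z : ExcursionSpace) ↦ ENNReal.ofReal (heatK z.1.1 (x - z.2.1)))
          (by fun_prop) (by fun_prop)]
        simp only [mul_right_comm, heatFlow]

theorem measurePairing_pos [SFinite μ] (ht : 0 < t) (hμ : μ ≠ 0) (hμ' : μ' ≠ 0) :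
    0 < measurePairing θ t μ μ' := by
  rw [measurePairing_eq_setLIntegral, setLIntegral_pos_iff (by fun_prop), inter_eq_right.2]
  · exact volume_excursionDomain_pos ht
  · intro z hz
    obtain ⟨hu, hu', hu''⟩ := mem_timeSimplex.1 hz.1
    exact mul_ne_zero (mul_ne_zero (excursionWeight_pos θ hu').ne'
      (pow_ne_zero 2 (heatFlow_pos hu hμ _).ne')) (pow_ne_zero 2 (heatFlow_pos hu'' hμ' _).ne')

theorem setLIntegral_heatK_mul_heatFlow_lt_top [IsFiniteMeasure μ] :
    ∫⁻ z in excursionDomain t, ENNReal.ofReal (heatK (z.1.2 / 2) (z.2.1 - z.2.2)) *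
      heatFlow z.1.1 μ z.2.1 < ∞ := by
  rw [setLIntegral_excursionDomain t (by fun_prop)]
  calc _ = ∫⁻ u in Ioo 0 t, ∫⁻ _ in Ioo 0 (t - u), μ univ :=
        setLIntegral_congr_fun measurableSet_Ioo fun u hu ↦
          setLIntegral_congr_fun measurableSet_Ioo fun u' hu' ↦ by
            have hmeas (y : Plane) :
                Measurable fun y' ↦ ENNReal.ofReal (heatK (u' / 2) (y - y')) := by fun_prop
            simp only [lintegral_mul_const _ (hmeas _), lintegral_heatK_sub_left (half_pos hu'.1),
              one_mul, lintegral_heatFlow hu.1]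
    _ ≤ ∫⁻ _ in Ioo 0 t, ∫⁻ _ in Ioo 0 t, μ univ :=
        setLIntegral_mono' measurableSet_Ioo fun u hu ↦
          lintegral_mono_set (Ioo_subset_Ioo_right (by linarith [hu.1]))
    _ < ∞ := by
        simp only [setLIntegral_const, Real.volume_Ioo]
        finiteness

theorem measurePairing_lt_top [IsFiniteMeasure μ] {M M' : ℝ≥0∞} (hM : M ≠ ∞) (hM' : M' ≠ ∞)
    (hμ : μ ≤ M • volume) (hμ' : μ' ≤ M' • volume) : measurePairing θ t μ μ' < ∞ := by
  obtain ⟨C, hC, hweight⟩ := exists_excursionWeight_le θ t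
  rw [measurePairing_eq_setLIntegral]
  calc _ ≤ ∫⁻ z in excursionDomain t, C * M * M' ^ 2 *
        (ENNReal.ofReal (heatK (z.1.2 / 2) (z.2.1 - z.2.2)) * heatFlow z.1.1 μ z.2.1) := by
        refine setLIntegral_mono' (isOpen_excursionDomain t).measurableSet fun z hz ↦ ?_
        obtain ⟨hu, -, hu''⟩ := mem_timeSimplex.1 hz.1
        calc _ ≤ C * ENNReal.ofReal (heatK (z.1.2 / 2) (z.2.1 - z.2.2)) *
              (M * heatFlow z.1.1 μ z.2.1) * M' ^ 2 := by
              rw [sq (heatFlow _ μ _)]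
              gcongr
              exacts [hweight z hz, heatFlow_le_of_le_smul_volume hu hμ _,
                heatFlow_le_of_le_smul_volume hu'' hμ' _]
          _ = _ := by ring
    _ = C * M * M' ^ 2 * ∫⁻ z in excursionDomain t,
        ENNReal.ofReal (heatK (z.1.2 / 2) (z.2.1 - z.2.2)) * heatFlow z.1.1 μ z.2.1 :=
        lintegral_const_mul' _ _ (by finiteness)
    _ < ∞ := mul_lt_top (by finiteness) setLIntegral_heatK_mul_heatFlow_lt_top

end MeasurePairing

section Density

variable {α : Type*} [MeasurableSpace α] {ν : Measure α} {g : α → ℝ}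

theorem lintegral_withDensity_ofReal (hg : AEMeasurable g ν) (F : α → ℝ≥0∞) :
    ∫⁻ x, F x ∂(ν.withDensity fun x ↦ ENNReal.ofReal (g x)) =
      ∫⁻ x, ENNReal.ofReal (g x) * F x ∂ν :=
  lintegral_withDensity_eq_lintegral_mul_non_measurable₀ ν hg.ennreal_ofReal
    (.of_forall fun _ ↦ ofReal_lt_top) F

theorem withDensity_ofReal_ne_zero (hg : AEMeasurable g ν) (hg0 : 0 ≤ᵐ[ν] g)
    (hne : ¬ g =ᵐ[ν] 0) : ν.withDensity (fun x ↦ ENNReal.ofReal (g x)) ≠ 0 := by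
  rw [Ne, withDensity_eq_zero_iff hg.ennreal_ofReal]
  refine fun h ↦ hne ?_
  filter_upwards [h, hg0] with x hx hx0
  exact le_antisymm (ofReal_eq_zero.1 hx) hx0

theorem withDensity_ofReal_le_eLpNorm_top_smul (ν : Measure α) (g : α → ℝ) :
    ν.withDensity (fun x ↦ ENNReal.ofReal (g x)) ≤ eLpNorm g ∞ ν • ν := by
  rw [← withDensity_const]
  refine withDensity_mono ?_
  filter_upwards [enorm_ae_le_eLpNormEssSup g ν] with x hx
  exact (Real.ofReal_le_enorm (g x)).trans (by rwa [eLpNorm_exponent_top])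

end Density

section Npair

variable {g g' : Plane → ℝ}

theorem Npair_eq_measurePairing (hg : AEMeasurable g) (hg' : AEMeasurable g')
    (hg0 : ∀ x, 0 ≤ g x) (hg'0 : ∀ x, 0 ≤ g' x) (θ : ℝ) :
    Npair g g' θ = measurePairing θ 1 (volume.withDensity fun x ↦ ENNReal.ofReal (g x))
      (volume.withDensity fun x ↦ ENNReal.ofReal (g' x)) := by
  simp only [measurePairing, lintegral_withDensity_ofReal hg, lintegral_withDensity_ofReal hg',
    ← lintegral_const_mul' _ _ ofReal_ne_top, Npair, ofReal_mul (hg0 _), ofReal_mul (hg'0 _)]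
  congr! 8
  ring

theorem Npair_pos_finite_general (hg : Integrable g) (hg_top : MemLp g ∞) (hg'_top : MemLp g' ∞)
    (hg0 : ∀ x, 0 ≤ g x) (hg'0 : ∀ x, 0 ≤ g' x)
    (hgne : ¬ g =ᵐ[volume] 0) (hg'ne : ¬ g' =ᵐ[volume] 0) (θ : ℝ) :
    0 < Npair g g' θ ∧ Npair g g' θ < ∞ := by
  have hgm := hg.aemeasurable
  have hg'm := hg'_top.aestronglyMeasurable.aemeasurable
  have := isFiniteMeasure_withDensity_ofReal hg.hasFiniteIntegral
  rw [Npair_eq_measurePairing hgm hg'm hg0 hg'0]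
  exact ⟨measurePairing_pos θ one_pos
      (withDensity_ofReal_ne_zero hgm (.of_forall hg0) hgne)
      (withDensity_ofReal_ne_zero hg'm (.of_forall hg'0) hg'ne),
    measurePairing_lt_top θ hg_top.eLpNorm_ne_top hg'_top.eLpNorm_ne_top
      (withDensity_ofReal_le_eLpNorm_top_smul _ g)
      (withDensity_ofReal_le_eLpNorm_top_smul _ g')⟩

end Npair

/-- For continuous, compactly supported, nonnegative, not-identically-zero `g, g'` and every
`θ̄ ∈ ℝ`, the pairing `N_{g,g'}(θ̄)` is finite and strictly positive. -/
theorem Npair_pos_finite (g g' : Plane → ℝ)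
    (hgc : Continuous g) (hg'c : Continuous g')
    (hgs : HasCompactSupport g) (hg's : HasCompactSupport g')
    (hg0 : ∀ x, 0 ≤ g x) (hg'0 : ∀ x, 0 ≤ g' x)
    (hgne : g ≠ 0) (hg'ne : g' ≠ 0) (θ : ℝ) :
    0 < Npair g g' θ ∧ Npair g g' θ < ⊤ := by
  exact Npair_pos_finite_general (hgc.integrable_of_hasCompactSupport hgs)
    (hgc.memLp_top_of_hasCompactSupport hgs volume)
    (hg'c.memLp_top_of_hasCompactSupport hg's volume) hg0 hg'0
    (fun h ↦ hgne (hgc.ae_eq_iff_eq volume continuous_zero |>.1 h))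
    (fun h ↦ hg'ne (hg'c.ae_eq_iff_eq volume continuous_zero |>.1 h)) θ

end
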